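/- For $\beta\in\mathbb R$ let $w(x):=(1-x^2)^{\beta}$ and $\varphi(x):=(1-x^2)^{1/2}$ on $[-1,1]$; $\|\cdot\|_{\infty}$ is the essential supremum norm on $[-1,1]$. For $f:[-1,1]\to\mathbb R$ and $h\ge 0$ put $$\Delta_h^2(f,x):=f(x-h)-2f(x)+f(x+h)\ \text{ if } x\pm h\in[-1,1],\qquad \Delta_h^2(f,x):=0\ \text{ otherwise},$$ $\overrightarrow{\Delta}{}_h^2(f,x):=\Delta_h^2(f,x+h)$ and $\overleftarrow{\Delta}{}_h^2(f,x):=\Delta_h^2(f,x-h)$. For $\delta>0$ and $1<q<\infty$ the weighted Ditzian–Totik modulus is $$\omega_\varphi^2(f,\delta)_{w,q}:=\sup_{0<h\le\delta}\bigl\|w\,\Delta^2_{h\varphi(\cdot)}(f,\cdot)\bigr\|_{L^q[-1+8h^2,\,1-8h^2]}+\sup_{0<h\le 8\delta^2}\bigl\|w\,\overrightarrow{\Delta}{}^2_h(f,\cdot)\bigr\|_{L^q[-1,\,-1+8\delta^2]}+\sup_{0<h\le 8\delta^2}\bigl\|w\,\overleftarrow{\Delta}{}^2_h(f,\cdot)\bigr\|_{L^q[1-8\delta^2,\,1]}$$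 (a norm over an empty interval being $0$). Let $\beta\in\mathbb R$ and $1<q<\infty$. Then there is a constant $c>0$, depending only on $q$ and $\beta$, such that for every measurable $f:[-1,1]\to\mathbb R$ that is convex on $(-1,1)$, vanishes on $(-1,0]$ and satisfies $\|wf\|_\infty<\infty$, and for every $0<\delta\le 1/4$, $$\omega_\varphi^2(f,\delta)_{w,q}\le c\,\delta^{2/q}\,\|wf\|_\infty .$$ -/

import Mathlib

open MeasureTheory Set
open scoped ENNReal

noncomputable section

/-- The Jacobi weight `w_{α,β}(x) = (1+x)^α (1-x)^β`. -/
def jacobi (α β : ℝ) (x : ℝ) : ℝ := (1 + x) ^ α * (1 - x) ^ β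

/-- `φ(x) = √(1-x²)`. -/
def phiW (x : ℝ) : ℝ := Real.sqrt (1 - x ^ 2)

/-- The `L^p` norm of `g` on the interval `[a,b]` (essential sup when `p = ∞`; zero when
the interval is empty). -/
def LpOn (g : ℝ → ℝ) (p : ℝ≥0∞) (a b : ℝ) : ℝ≥0∞ :=
  eLpNorm g p (volume.restrict (Icc a b))

/-- The `k`-th symmetric difference `Δ_h^k(f,x)` relative to `[-1,1]`. -/
def symmDelta (k : ℕ) (h : ℝ) (f : ℝ → ℝ) (x : ℝ) : ℝ :=
  if (x - k * h / 2 ∈ Icc (-1 : ℝ) 1 ∧ x + k * h / 2 ∈ Icc (-1 : ℝ) 1) then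
    ∑ i ∈ Finset.range (k + 1), ((k.choose i : ℝ) * (-1 : ℝ) ^ (k - i) * f (x - k * h / 2 + i * h))
  else 0

/-- Main-part weighted modulus `Ω_φ^k(f,δ)_{w,p}`. -/
def OmegaMain (k : ℕ) (f : ℝ → ℝ) (δ : ℝ) (wt : ℝ → ℝ) (p : ℝ≥0∞) : ℝ≥0∞ :=
  ⨆ h ∈ Ioc (0 : ℝ) δ,
    LpOn (fun x => wt x * symmDelta k (h * phiW x) f x) p
      (-1 + 2 * (k : ℝ) ^ 2 * h ^ 2) (1 - 2 * (k : ℝ) ^ 2 * h ^ 2)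

/-- Forward part `Ω→_φ^k(f,δ)_{w,p}`. -/
def OmegaFwd (k : ℕ) (f : ℝ → ℝ) (δ : ℝ) (wt : ℝ → ℝ) (p : ℝ≥0∞) : ℝ≥0∞ :=
  ⨆ h ∈ Ioc (0 : ℝ) (2 * (k : ℝ) ^ 2 * δ ^ 2),
    LpOn (fun x => wt x * symmDelta k h f (x + k * h / 2)) p
      (-1) (-1 + 2 * (k : ℝ) ^ 2 * δ ^ 2)

/-- Backward part `Ω←_φ^k(f,δ)_{w,p}`. -/
def OmegaBwd (k : ℕ) (f : ℝ → ℝ) (δ : ℝ) (wt : ℝ → ℝ) (p : ℝ≥0∞) : ℝ≥0∞ :=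
  ⨆ h ∈ Ioc (0 : ℝ) (2 * (k : ℝ) ^ 2 * δ ^ 2),
    LpOn (fun x => wt x * symmDelta k h f (x - k * h / 2)) p
      (1 - 2 * (k : ℝ) ^ 2 * δ ^ 2) 1

/-- Weighted Ditzian–Totik modulus `ω_φ^k(f,δ)_{w,p}`. -/
def omegaDT (k : ℕ) (f : ℝ → ℝ) (δ : ℝ) (wt : ℝ → ℝ) (p : ℝ≥0∞) : ℝ≥0∞ :=
  OmegaMain k f δ wt p + OmegaFwd k f δ wt p + OmegaBwd k f δ wt p

/-- `f` is `k`-monotone on `(-1,1)`: all `k`-th divided differences over `k+1` distinct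
points of `(-1,1)` are nonnegative. -/
def kMonotoneOn (k : ℕ) (f : ℝ → ℝ) : Prop :=
  ∀ x : Fin (k + 1) → ℝ, Function.Injective x → (∀ i, x i ∈ Ioo (-1 : ℝ) 1) →
    0 ≤ ∑ i, f (x i) / ∏ j ∈ Finset.univ.erase i, (x i - x j)

/-- `M_+^k`, the `k`-monotone functions on `(-1,1)` vanishing on `(-1,0]`. -/
def MPlus (k : ℕ) : Set (ℝ → ℝ) :=
  {f | kMonotoneOn k f ∧ ∀ x : ℝ, -1 < x → x ≤ 0 → f x = 0}

/-- `W_p^{α,β}`: the functions that are (Lebesgue) measurable on `[-1,1]` with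
`‖w_{α,β} f‖_p < ∞`. Functions on `[-1,1]` are represented by functions on `ℝ`; values outside
`[-1,1]` play no role in any of the definitions. -/
def WSet (p : ℝ≥0∞) (α β : ℝ) : Set (ℝ → ℝ) :=
  {f | AEMeasurable f (volume.restrict (Icc (-1 : ℝ) 1)) ∧
    LpOn (fun x => jacobi α β x * f x) p (-1) 1 < ∞}

end

/-!
A convex function on `(-1,1)` vanishing on `(-1,0]` is nonnegative and nondecreasing, and
`‖w f‖_∞ ≤ M` bounds it by `M (1-x)^{-β}` up to a constant. On the two end intervals, of length
`8δ²`, the weighted second differences are bounded by a multiple of `M`, which gives `δ^{2/q} M`;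
when `β < 0`, so that the weight of the theorem blows up at `-1`, the growth bound forces `f = 0`.

In the middle, second differences of a convex function increase with the step, so where
`1 - x ≈ T = 8h²r²` the variable step `hφ(x)` can be replaced by the constant `S = 6h²r`. For a
constant step both the supremum of the second difference and `1/S` times its integral are at most
one increment of `f` over a length `S` at `1 - T`, hence at most a multiple of
`(S/T) T^{-β} M ≈ T^{-β} M / r`. So the `q`-th power of the weighted second difference has integral
at most a multiple of `M^q h² r^{1-q}`, and since `q > 1` these bounds form a convergent geometric
series over `r = (3/2)^j`.
-/

/-- The second symmetric difference of `g` with step `t`, without the truncation to `[-1,1]` that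
is built into `symmDelta 2`. -/
def secondDiff (g : ℝ → ℝ) (t x : ℝ) : ℝ := g (x - t) - 2 * g x + g (x + t)

section Convex

variable {g : ℝ → ℝ} {s : Set ℝ}

theorem add_le_add_of_convexOn (hg : ConvexOn ℝ s g) {a b c d : ℝ} (ha : a ∈ s) (hd : d ∈ s)
    (hab : a ≤ b) (hac : a ≤ c) (hsum : a + d = b + c) : g b + g c ≤ g a + g d := by
  rcases (show a ≤ d by linarith).eq_or_lt with rfl | had
  · rw [show b = a by linarith, show c = a by linarith]
  have hpos : 0 < d - a := sub_pos.2 had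
  have hb0 : 0 ≤ (b - a) / (d - a) := div_nonneg (by linarith) hpos.le
  have hc0 : 0 ≤ (c - a) / (d - a) := div_nonneg (by linarith) hpos.le
  have hbc : (c - a) / (d - a) + (b - a) / (d - a) = 1 := by
    rw [← add_div, div_eq_one_iff_eq hpos.ne']
    linarith
  have hb : (c - a) / (d - a) * a + (b - a) / (d - a) * d = b := by
    field_simp
    linear_combination -a * hsum
  have hc : (b - a) / (d - a) * a + (c - a) / (d - a) * d = c := by
    field_simp
    linear_combination -a * hsum
  have hgb := hg.2 ha hd hc0 hb0 hbc
  have hgc := hg.2 ha hd hb0 hc0 (by rw [add_comm, hbc])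
  simp only [smul_eq_mul, hb, hc] at hgb hgc
  linear_combination hgb + hgc + (g a + g d) * hbc

theorem secondDiff_le_secondDiff (hg : ConvexOn ℝ s g) {x t u : ℝ} (ht : 0 ≤ t) (htu : t ≤ u)
    (hl : x - u ∈ s) (hr : x + u ∈ s) : secondDiff g t x ≤ secondDiff g u x := by
  have := add_le_add_of_convexOn hg hl hr (b := x - t) (c := x + t) (by linarith) (by linarith)
    (by ring)
  simp only [secondDiff]
  linarith

theorem secondDiff_nonneg (hg : ConvexOn ℝ s g) {x t : ℝ} (ht : 0 ≤ t) (hl : x - t ∈ s)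
    (hr : x + t ∈ s) : 0 ≤ secondDiff g t x := by
  refine le_trans (le_of_eq ?_) (secondDiff_le_secondDiff hg le_rfl ht hl hr)
  simp only [secondDiff, sub_zero, add_zero]
  ring

theorem monotoneOn_forwardDiff {a b t : ℝ} (hg : ConvexOn ℝ (Icc a (b + t)) g) (ht : 0 ≤ t) :
    MonotoneOn (fun x => g (x + t) - g x) (Icc a b) := by
  intro x hx y hy hxy
  have := add_le_add_of_convexOn hg (a := x) (b := x + t) (c := y) (d := y + t)
    ⟨hx.1, by linarith [hx.2]⟩ ⟨by linarith [hy.1], by linarith [hy.2]⟩ (by linarith) hxy (by ring)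
  linarith

theorem sub_le_div_mul_of_convexOn (hg : ConvexOn ℝ s g) {x y z : ℝ} (hx : x ∈ s) (hz : z ∈ s)
    (hxy : x < y) (hyz : y < z) (hy : 0 ≤ g y) : g y - g x ≤ (y - x) / (z - y) * g z := by
  have hslope := hg.slope_mono_adjacent hx hz hxy hyz
  rw [div_le_iff₀ (sub_pos.2 hxy)] at hslope
  calc g y - g x ≤ (g z - g y) / (z - y) * (y - x) := hslope
    _ ≤ g z / (z - y) * (y - x) := by
        have := sub_pos.2 hyz
        have := sub_pos.2 hxy
        gcongr
        linarith
    _ = (y - x) / (z - y) * g z := by ring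

variable {a b t : ℝ}

theorem secondDiff_eq_mul_slope (ht : t ≠ 0) (x : ℝ) :
    secondDiff g t x = t * slope (fun y => g (y + t) - g y) (x - t) (x - t + t) := by
  rw [slope_def_field, sub_add_cancel, sub_sub_cancel, mul_div_cancel₀ _ ht, secondDiff]
  ring

theorem intervalIntegrable_secondDiff (hg : ConvexOn ℝ (Icc (a - t) (b + t)) g) (hab : a ≤ b)
    (ht : 0 < t) : IntervalIntegrable (secondDiff g t) volume a b := by
  have hslope := ((monotoneOn_forwardDiff hg ht.le).mono
    (Icc_subset_Icc_right (by linarith : b - t + t ≤ b))).intervalIntegrable_slope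
      (sub_le_sub_right hab t) ht.le
  rw [funext (secondDiff_eq_mul_slope ht.ne')]
  simpa only [sub_add_cancel] using (hslope.comp_sub_right t).const_mul t

/-- The second difference is the first difference of `x ↦ g (x + t) - g x`, so its integral
telescopes. -/
theorem integral_secondDiff_le (hg : ConvexOn ℝ (Icc (a - t) (b + t)) g) (hab : a ≤ b)
    (ht : 0 < t) :
    ∫ x in a..b, secondDiff g t x ≤ t * ((g (b + t) - g b) - (g a - g (a - t))) := by
  have hslope := ((monotoneOn_forwardDiff hg ht.le).mono
    (Icc_subset_Icc_right (by linarith : b - t + t ≤ b))).intervalIntegral_slope_le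
      (sub_le_sub_right hab t) ht.le
  simp only [secondDiff_eq_mul_slope ht.ne', intervalIntegral.integral_const_mul]
  rw [intervalIntegral.integral_comp_sub_right
    (fun y => slope (fun y => g (y + t) - g y) y (y + t))]
  simp only [sub_add_cancel] at hslope
  exact mul_le_mul_of_nonneg_left hslope ht.le

theorem secondDiff_le_sub (hg : ConvexOn ℝ (Icc (a - t) (b + t)) g)
    (hmono : MonotoneOn g (Icc (a - t) (b + t))) (ht : 0 ≤ t) {x : ℝ} (hx : x ∈ Icc a b) :
    secondDiff g t x ≤ g (b + t) - g b := by
  obtain ⟨hax, hxb⟩ := hx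
  have hforward : g (x + t) - g x ≤ g (b + t) - g b := monotoneOn_forwardDiff hg ht
    ⟨by linarith, hxb⟩ (right_mem_Icc.2 (by linarith)) hxb
  have hback : g (x - t) ≤ g x := hmono ⟨by linarith, by linarith⟩ ⟨by linarith, by linarith⟩
    (by linarith)
  simp only [secondDiff]
  linarith

theorem setLIntegral_secondDiff_le (hg : ConvexOn ℝ (Icc (a - t) (b + t)) g)
    (hmono : MonotoneOn g (Icc (a - t) (b + t))) (hab : a ≤ b) (ht : 0 < t) :
    ∫⁻ x in Icc a b, ENNReal.ofReal (secondDiff g t x) ≤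
      ENNReal.ofReal (t * (g (b + t) - g b)) := by
  have hint := intervalIntegrable_secondDiff hg hab ht
  rw [intervalIntegrable_iff_integrableOn_Icc_of_le hab] at hint
  have hnonneg : ∀ x ∈ Icc a b, 0 ≤ secondDiff g t x := fun x hx =>
    secondDiff_nonneg hg ht.le ⟨by linarith [hx.1], by linarith [hx.2]⟩
      ⟨by linarith [hx.1], by linarith [hx.2]⟩
  rw [← ofReal_integral_eq_lintegral_ofReal hint
      (ae_restrict_of_forall_mem measurableSet_Icc hnonneg),
    integral_Icc_eq_integral_Ioc, ← intervalIntegral.integral_of_le hab]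
  refine ENNReal.ofReal_le_ofReal ((integral_secondDiff_le hg hab ht).trans ?_)
  have : g (a - t) ≤ g a := hmono ⟨le_rfl, by linarith⟩ ⟨by linarith, by linarith⟩ (by linarith)
  exact mul_le_mul_of_nonneg_left (by linarith) ht.le

theorem lintegral_rpow_le_of_ae_le {Ω : Type*} [MeasurableSpace Ω] {μ : Measure Ω}
    {u : Ω → ℝ≥0∞} {K : ℝ≥0∞} (hK : K ≠ ∞) (hu : ∀ᵐ x ∂μ, u x ≤ K) {p : ℝ} (hp : 1 ≤ p) :
    ∫⁻ x, u x ^ p ∂μ ≤ K ^ (p - 1) * ∫⁻ x, u x ∂μ := by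
  rw [← lintegral_const_mul' _ _ (ENNReal.rpow_ne_top_of_nonneg (sub_nonneg.2 hp) hK)]
  refine lintegral_mono_ae (hu.mono fun x hx => ?_)
  calc u x ^ p = u x ^ (p - 1 + 1) := by rw [sub_add_cancel]
    _ = u x ^ (p - 1) * u x := by
        rw [ENNReal.rpow_add_of_nonneg _ _ (sub_nonneg.2 hp) zero_le_one, ENNReal.rpow_one]
    _ ≤ K ^ (p - 1) * u x := by gcongr

theorem setLIntegral_secondDiff_rpow_le (hg : ConvexOn ℝ (Icc (a - t) (b + t)) g)
    (hmono : MonotoneOn g (Icc (a - t) (b + t))) (hab : a ≤ b) (ht : 0 < t) {p : ℝ} (hp : 1 ≤ p) :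
    ∫⁻ x in Icc a b, ENNReal.ofReal (secondDiff g t x) ^ p ≤
      ENNReal.ofReal (t * (g (b + t) - g b) ^ p) := by
  set E := g (b + t) - g b
  have hE : 0 ≤ E := sub_nonneg.2 <|
    hmono ⟨by linarith, by linarith⟩ ⟨by linarith, le_rfl⟩ (by linarith)
  have hsup : ∀ᵐ x ∂volume.restrict (Icc a b),
      ENNReal.ofReal (secondDiff g t x) ≤ ENNReal.ofReal E :=
    ae_restrict_of_forall_mem measurableSet_Icc fun x hx =>
      ENNReal.ofReal_le_ofReal (secondDiff_le_sub hg hmono ht.le hx)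
  calc ∫⁻ x in Icc a b, ENNReal.ofReal (secondDiff g t x) ^ p
      ≤ ENNReal.ofReal E ^ (p - 1) * ∫⁻ x in Icc a b, ENNReal.ofReal (secondDiff g t x) :=
        lintegral_rpow_le_of_ae_le ENNReal.ofReal_ne_top hsup hp
    _ ≤ ENNReal.ofReal E ^ (p - 1) * ENNReal.ofReal (t * E) := by
        gcongr
        exact setLIntegral_secondDiff_le hg hmono hab ht
    _ = ENNReal.ofReal (t * E ^ p) := by
        rw [ENNReal.ofReal_rpow_of_nonneg hE (sub_nonneg.2 hp),
          ← ENNReal.ofReal_mul (by positivity), mul_left_comm,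
          ← Real.rpow_add_one' hE (by linarith), sub_add_cancel]

end Convex

section Weight

theorem rpow_le_rpow_abs_mul_rpow {a b L : ℝ} (β : ℝ) (ha : 0 < a) (hb : 0 < b) (hab : a ≤ L * b)
    (hba : b ≤ L * a) : a ^ β ≤ L ^ |β| * b ^ β := by
  have hL : 0 < L := pos_of_mul_pos_left (ha.trans_le hab) hb.le
  rcases le_total 0 β with hβ | hβ
  · rw [abs_of_nonneg hβ, ← Real.mul_rpow hL.le hb.le]
    exact Real.rpow_le_rpow ha.le hab hβ
  · rw [abs_of_nonpos hβ, Real.rpow_neg hL.le, ← Real.inv_rpow hL.le,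
      ← Real.mul_rpow (by positivity) hb.le]
    exact Real.rpow_le_rpow_of_nonpos (by positivity) ((inv_mul_le_iff₀ hL).2 hba) hβ

theorem rpow_le_rpow_abs {a L : ℝ} (β : ℝ) (ha : 0 < a) (haL : a ≤ L) (hL : 1 ≤ L * a) :
    a ^ β ≤ L ^ |β| := by
  simpa using rpow_le_rpow_abs_mul_rpow β ha one_pos (by linarith) hL

theorem jacobi_nonneg {α β x : ℝ} (hx : x ∈ Icc (-1 : ℝ) 1) : 0 ≤ jacobi α β x :=
  mul_nonneg (Real.rpow_nonneg (by linarith [hx.1]) _) (Real.rpow_nonneg (by linarith [hx.2]) _)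

theorem continuousOn_jacobi (α β : ℝ) : ContinuousOn (jacobi α β) (Ioo (-1) 1) := by
  refine ContinuousOn.mul ?_ ?_ <;> refine ContinuousOn.rpow_const (by fun_prop) fun x hx => ?_
  · exact Or.inl (by linarith [hx.1])
  · exact Or.inl (by linarith [hx.2])

theorem phiW_nonneg (x : ℝ) : 0 ≤ phiW x := Real.sqrt_nonneg _

theorem sq_mul_phiW (h : ℝ) {x : ℝ} (hx : |x| ≤ 1) :
    (h * phiW x) ^ 2 = h ^ 2 * ((1 - x) * (1 + x)) := by
  rw [mul_pow, phiW, Real.sq_sqrt (sub_nonneg.2 ((sq_le_one_iff_abs_le_one x).2 hx))]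
  ring

theorem mul_phiW_le {h x : ℝ} (hx : |x| ≤ 1 - 8 * h ^ 2) : h * phiW x ≤ (1 - |x|) / 2 := by
  have hx1 : |x| ≤ 1 := hx.trans (by linarith [sq_nonneg h])
  refine le_of_sq_le_sq ?_ (by linarith)
  calc (h * phiW x) ^ 2 = h ^ 2 * ((1 - |x|) * (1 + |x|)) := by
        rw [sq_mul_phiW h hx1]
        linear_combination h ^ 2 * sq_abs x
    _ ≤ (1 - |x|) / 8 * ((1 - |x|) * 2) := by
        have := abs_nonneg x
        gcongr <;> linarith
    _ = ((1 - |x|) / 2) ^ 2 := by ring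

end Weight

section Norm

theorem enorm_le_eLpNorm_top_of_continuousOn {X E : Type*} [TopologicalSpace X]
    [MeasurableSpace X] {μ : Measure X} [μ.IsOpenPosMeasure] [TopologicalSpace E]
    [ContinuousENorm E] {u : X → E} {U s : Set X} (hU : IsOpen U) (hUs : U ⊆ s)
    (hu : ContinuousOn u U) {x : X} (hx : x ∈ U) : ‖u x‖ₑ ≤ eLpNorm u ∞ (μ.restrict s) := by
  by_contra! hlt
  set N := eLpNorm u ∞ (μ.restrict s) with hN
  set V := U ∩ (fun y => ‖u y‖ₑ) ⁻¹' Ioi N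
  have hV : IsOpen V := hu.enorm.isOpen_inter_preimage hU isOpen_Ioi
  have hnull : (μ.restrict s) V = 0 := by
    have hae : ∀ᵐ y ∂μ.restrict s, ‖u y‖ₑ ≤ N := by
      rw [hN, eLpNorm_exponent_top]
      exact ae_le_eLpNormEssSup
    exact measure_mono_null (fun y hy => not_le.2 (mem_Ioi.1 hy.2)) (ae_iff.1 hae)
  rw [Measure.restrict_eq_self μ (inter_subset_left.trans hUs)] at hnull
  exact hV.measure_ne_zero μ ⟨x, hx, hlt⟩ hnull

theorem LpOn_le_of_forall_mem_Ioo {u : ℝ → ℝ} {K a b : ℝ} (q : ℝ≥0∞)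
    (hK : 0 ≤ K) (hab : a ≤ b) (hu : ∀ x ∈ Ioo a b, ‖u x‖ ≤ K) :
    LpOn u q a b ≤ ENNReal.ofReal (K * (b - a) ^ q.toReal⁻¹) := by
  have hae : ∀ᵐ x ∂volume.restrict (Icc a b), ‖u x‖ ≤ K := by
    rw [← restrict_Ioo_eq_restrict_Icc]
    exact ae_restrict_of_forall_mem measurableSet_Ioo hu
  refine (eLpNorm_le_of_ae_bound hae).trans (le_of_eq ?_)
  rw [Measure.restrict_apply_univ, Real.volume_Icc, mul_comm,
    ENNReal.ofReal_rpow_of_nonneg (sub_nonneg.2 hab) (by positivity), ← ENNReal.ofReal_mul hK]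

end Norm

section MPlusTwo

variable {f : ℝ → ℝ}

theorem convexOn_of_kMonotoneOn_two (hf : kMonotoneOn 2 f) : ConvexOn ℝ (Ioo (-1) 1) f := by
  refine convexOn_of_slope_mono_adjacent (convex_Ioo _ _) fun {a b c} ha hc hab hbc => ?_
  have hinj : Function.Injective ![a, b, c] := by
    refine StrictMono.injective (Fin.strictMono_iff_lt_succ.2 fun i => ?_)
    fin_cases i
    exacts [hab, hbc]
  have hmem : ∀ i, ![a, b, c] i ∈ Ioo (-1 : ℝ) 1 := by
    intro i
    fin_cases i
    exacts [ha, ⟨ha.1.trans hab, hbc.trans hc.2⟩, hc]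
  have hdivided : 0 ≤ f a / ((a - b) * (a - c)) + f b / ((b - a) * (b - c)) +
      f c / ((c - a) * (c - b)) := by
    have h := hf ![a, b, c] hinj hmem
    rw [Fin.sum_univ_three, show Finset.univ.erase (0 : Fin 3) = {1, 2} by decide,
      show Finset.univ.erase (1 : Fin 3) = {0, 2} by decide,
      show Finset.univ.erase (2 : Fin 3) = {0, 1} by decide] at h
    simpa using h
  have hca : 0 < c - a := sub_pos.2 (hab.trans hbc)
  have hslope : (f c - f b) / (c - b) - (f b - f a) / (b - a) =
      (c - a) * (f a / ((a - b) * (a - c)) + f b / ((b - a) * (b - c)) +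
        f c / ((c - a) * (c - b))) := by
    rw [← neg_sub b a, ← neg_sub c a, ← neg_sub c b]
    field_simp [(sub_pos.2 hab).ne', (sub_pos.2 hbc).ne', hca.ne']
    ring
  exact sub_nonneg.1 (hslope ▸ mul_nonneg hca.le hdivided)

theorem monotoneOn_of_mem_MPlus_two (hf : f ∈ MPlus 2) : MonotoneOn f (Ioo (-1) 1) := by
  obtain ⟨hmono, hzero⟩ := hf
  have hconv := convexOn_of_kMonotoneOn_two hmono
  have hleft : ∀ {x y}, -1 < x → x ≤ 0 → x < y → y < 1 → f x ≤ f y := fun {x y} hx hx0 hxy hy => by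
    refine hconv.le_right_of_left_le'' (x := (x - 1) / 2) ⟨by linarith, by linarith⟩
      ⟨by linarith, hy⟩ (by linarith) hxy.le ?_
    rw [hzero _ (by linarith) (by linarith), hzero x hx hx0]
  intro x hx y hy hxy
  rcases hxy.eq_or_lt with rfl | hxy
  · rfl
  rcases le_or_gt x 0 with hx0 | hx0
  · exact hleft hx.1 hx0 hxy hy.2
  · exact hconv.le_right_of_left_le'' ⟨by norm_num, by norm_num⟩ hy hx0 hxy.le
      (hleft (by norm_num) le_rfl hx0 hx.2)

/-- The extension of the restriction of `f` to `[0,1)` that is constant on `(-∞,0]`. A member of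
`MPlus 2` agrees with it on `(-1,1)`, and second differences of the extension make sense for steps
that reach beyond `-1`. -/
def leftExt (f : ℝ → ℝ) (x : ℝ) : ℝ := f (max x 0)

theorem leftExt_of_nonpos (hf : f ∈ MPlus 2) {x : ℝ} (hx : x ≤ 0) : leftExt f x = 0 := by
  rw [leftExt, max_eq_right hx, hf.2 0 (by norm_num) le_rfl]

theorem leftExt_of_nonneg (f : ℝ → ℝ) {x : ℝ} (hx : 0 ≤ x) : leftExt f x = f x := by
  rw [leftExt, max_eq_left hx]

theorem leftExt_eq (hf : f ∈ MPlus 2) {x : ℝ} (hx : -1 < x) : leftExt f x = f x := by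
  rcases le_total x 0 with hx0 | hx0
  · rw [leftExt_of_nonpos hf hx0, hf.2 x hx hx0]
  · exact leftExt_of_nonneg f hx0

theorem max_zero_mem_Ioo {x : ℝ} (hx : x < 1) : max x 0 ∈ Ioo (-1 : ℝ) 1 :=
  ⟨by linarith [le_max_right x 0], max_lt hx one_pos⟩

theorem monotoneOn_leftExt (hf : f ∈ MPlus 2) : MonotoneOn (leftExt f) (Iio 1) :=
  fun _ hx _ hy hxy => monotoneOn_of_mem_MPlus_two hf (max_zero_mem_Ioo hx) (max_zero_mem_Ioo hy)
    (max_le_max_right 0 hxy)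

theorem convexOn_leftExt (hf : f ∈ MPlus 2) : ConvexOn ℝ (Iio 1) (leftExt f) := by
  have himage : (fun x : ℝ => max x 0) '' Iio 1 = Ico 0 1 := by
    refine Subset.antisymm ?_ fun x hx => ⟨x, hx.2, max_eq_left hx.1⟩
    rintro _ ⟨x, hx, rfl⟩
    exact ⟨le_max_right _ _, max_lt hx one_pos⟩
  have hsub : Ico (0 : ℝ) 1 ⊆ Ioo (-1) 1 := fun x hx => ⟨by linarith [hx.1], hx.2⟩
  refine ConvexOn.comp (f := fun x : ℝ => max x 0) (g := f) ?_ ?_ ?_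
  · rw [himage]
    exact (convexOn_of_kMonotoneOn_two hf.1).subset hsub (convex_Ico 0 1)
  · exact (convexOn_id (convex_Iio 1)).sup (convexOn_const 0 (convex_Iio 1))
  · rw [himage]
    exact (monotoneOn_of_mem_MPlus_two hf).mono hsub

theorem leftExt_nonneg (hf : f ∈ MPlus 2) {x : ℝ} (hx : x < 1) : 0 ≤ leftExt f x := by
  rw [← leftExt_of_nonpos hf (min_le_right x 0)]
  exact monotoneOn_leftExt hf ((min_le_left x 0).trans_lt hx) hx (min_le_left x 0)

theorem symmDelta_two (h : ℝ) (f : ℝ → ℝ) {x : ℝ} (hl : x - h ∈ Icc (-1 : ℝ) 1)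
    (hr : x + h ∈ Icc (-1 : ℝ) 1) : symmDelta 2 h f x = secondDiff f h x := by
  rw [symmDelta, Nat.cast_ofNat, mul_div_cancel_left₀ h two_ne_zero, if_pos ⟨hl, hr⟩]
  have hright : x - h + 2 * h = x + h := by ring
  simp [Finset.sum_range_succ, secondDiff, hright, sub_eq_add_neg (f (x - h))]

theorem symmDelta_two_eq_secondDiff_leftExt (hf : f ∈ MPlus 2) {x h : ℝ} (hh : 0 ≤ h)
    (hl : -1 < x - h) (hr : x + h < 1) : symmDelta 2 h f x = secondDiff (leftExt f) h x := by
  rw [symmDelta_two h f ⟨hl.le, by linarith⟩ ⟨by linarith, hr.le⟩, secondDiff, secondDiff,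
    leftExt_eq hf hl, leftExt_eq hf (by linarith), leftExt_eq hf (by linarith)]

end MPlusTwo

section Growth

variable {f : ℝ → ℝ} {α β M : ℝ}

theorem leftExt_mul_rpow_le (hf : f ∈ MPlus 2)
    (hN : LpOn (fun x => jacobi α β x * f x) ∞ (-1) 1 ≠ ∞) {x : ℝ} (hx : x < 1) :
    leftExt f x * (1 - x) ^ β ≤
      2 ^ |α| * (LpOn (fun x => jacobi α β x * f x) ∞ (-1) 1).toReal := by
  rcases le_or_gt x 0 with hx0 | hx0
  · rw [leftExt_of_nonpos hf hx0, zero_mul]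
    positivity
  have hxI : x ∈ Ioo (-1 : ℝ) 1 := ⟨by linarith, hx⟩
  have hcont : ContinuousOn (fun x => jacobi α β x * f x) (Ioo (-1) 1) :=
    (continuousOn_jacobi α β).mul ((convexOn_of_kMonotoneOn_two hf.1).continuousOn isOpen_Ioo)
  have hsup : ‖jacobi α β x * f x‖ ≤ (LpOn (fun x => jacobi α β x * f x) ∞ (-1) 1).toReal := by
    rw [← toReal_enorm]
    exact ENNReal.toReal_mono hN
      (enorm_le_eLpNorm_top_of_continuousOn isOpen_Ioo Ioo_subset_Icc_self hcont hxI)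
  have hleft : (1 : ℝ) ≤ 2 ^ |α| * (1 + x) ^ α := by
    simpa using rpow_le_rpow_abs_mul_rpow (L := 2) α one_pos (by linarith : 0 < 1 + x)
      (by linarith) (by linarith)
  have hnonneg : 0 ≤ leftExt f x * (1 - x) ^ β :=
    mul_nonneg (leftExt_nonneg hf hx) (Real.rpow_nonneg (by linarith) _)
  calc leftExt f x * (1 - x) ^ β
      ≤ 2 ^ |α| * (1 + x) ^ α * (leftExt f x * (1 - x) ^ β) := le_mul_of_one_le_left hnonneg hleft
    _ = 2 ^ |α| * (jacobi α β x * f x) := by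
        rw [leftExt_eq hf hxI.1, jacobi]
        ring
    _ ≤ _ := by
        gcongr
        exact (le_abs_self _).trans hsup

theorem bound_nonneg_of_leftExt_mul_rpow_le (hf : f ∈ MPlus 2)
    (hM : ∀ x < 1, leftExt f x * (1 - x) ^ β ≤ M) : 0 ≤ M := by
  simpa [leftExt_of_nonpos hf le_rfl] using hM 0 one_pos

theorem leftExt_eq_zero_of_neg (hf : f ∈ MPlus 2) (hβ : β < 0)
    (hM : ∀ x < 1, leftExt f x * (1 - x) ^ β ≤ M) {x : ℝ} (hx : x < 1) : leftExt f x = 0 := by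
  have hlim : Filter.Tendsto (fun t : ℝ => M * t ^ (-β)) (nhdsWithin 0 (Ioi 0)) (nhds 0) := by
    have hcont : ContinuousAt (fun t : ℝ => M * t ^ (-β)) 0 :=
      continuousAt_const.mul (continuousAt_id.rpow_const (Or.inr (neg_pos.2 hβ).le))
    have hzero : M * (0 : ℝ) ^ (-β) = 0 := by rw [Real.zero_rpow (neg_pos.2 hβ).ne', mul_zero]
    simpa only [hzero] using hcont.tendsto.mono_left nhdsWithin_le_nhds
  refine le_antisymm (ge_of_tendsto hlim ?_) (leftExt_nonneg hf hx)
  filter_upwards [Ioo_mem_nhdsGT (sub_pos.2 hx)] with t ht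
  have ht1 : 1 - t < 1 := by linarith [ht.1]
  calc leftExt f x ≤ leftExt f (1 - t) := monotoneOn_leftExt hf hx ht1 (by linarith [ht.2])
    _ ≤ M * t ^ (-β) := by
        rw [Real.rpow_neg ht.1.le, ← div_eq_mul_inv, le_div_iff₀ (Real.rpow_pos_of_pos ht.1 _)]
        simpa using hM (1 - t) ht1

theorem leftExt_le_of_le_half (hf : f ∈ MPlus 2) (hM : ∀ x < 1, leftExt f x * (1 - x) ^ β ≤ M)
    {x : ℝ} (hx : x ≤ 1 / 2) : leftExt f x ≤ 2 ^ |β| * M := by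
  have hhalf : (1 / 2 : ℝ) < 1 := by norm_num
  have hone : (1 : ℝ) ≤ 2 ^ |β| * (1 - 1 / 2) ^ β := by
    simpa using rpow_le_rpow_abs_mul_rpow (L := 2) β one_pos (sub_pos.2 hhalf) (by norm_num)
      (by norm_num)
  calc leftExt f x ≤ leftExt f (1 / 2) := monotoneOn_leftExt hf (hx.trans_lt hhalf) hhalf hx
    _ ≤ 2 ^ |β| * (1 - 1 / 2) ^ β * leftExt f (1 / 2) :=
        le_mul_of_one_le_left (leftExt_nonneg hf hhalf) hone
    _ = 2 ^ |β| * (leftExt f (1 / 2) * (1 - 1 / 2) ^ β) := by ring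
    _ ≤ 2 ^ |β| * M := by
        gcongr
        exact hM _ hhalf

end Growth

section EndParts

variable {f : ℝ → ℝ} {α β M h x δ : ℝ}

theorem norm_jacobi_mul_forwardDelta_le (hf : f ∈ MPlus 2) (hαβ : 0 ≤ α ∨ β < 0)
    (hM : ∀ x < 1, leftExt f x * (1 - x) ^ β ≤ M) (hh : 0 ≤ h) (hh' : h ≤ 1 / 2)
    (hx : -1 < x) (hx' : x < -1 / 2) :
    ‖jacobi α β x * symmDelta 2 h f (x + h)‖ ≤ 4 ^ |β| * M := by
  have hM0 : 0 ≤ M := bound_nonneg_of_leftExt_mul_rpow_le hf hM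
  have hdiff : symmDelta 2 h f (x + h) = leftExt f (x + h + h) := by
    rw [symmDelta_two_eq_secondDiff_leftExt hf hh (by linarith) (by linarith), secondDiff,
      leftExt_of_nonpos hf (by linarith : x + h - h ≤ 0),
      leftExt_of_nonpos hf (by linarith : x + h ≤ 0), mul_zero, sub_zero, zero_add]
  rw [hdiff]
  rcases hαβ with hα | hβ
  · have hw : jacobi α β x ≤ 1 * 2 ^ |β| :=
      mul_le_mul (Real.rpow_le_one (by linarith) (by linarith) hα)
        (rpow_le_rpow_abs β (by linarith) (by linarith) (by linarith))
        (Real.rpow_nonneg (by linarith) _) zero_le_one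
    have hnonneg : 0 ≤ leftExt f (x + h + h) := leftExt_nonneg hf (by linarith)
    rw [Real.norm_of_nonneg (mul_nonneg (jacobi_nonneg ⟨hx.le, by linarith⟩) hnonneg)]
    calc jacobi α β x * leftExt f (x + h + h) ≤ 1 * 2 ^ |β| * (2 ^ |β| * M) :=
          mul_le_mul hw (leftExt_le_of_le_half hf hM (by linarith)) hnonneg (by positivity)
      _ = 4 ^ |β| * M := by
          rw [one_mul, ← mul_assoc, ← Real.mul_rpow zero_le_two zero_le_two]
          norm_num
  · rw [leftExt_eq_zero_of_neg hf hβ hM (by linarith), mul_zero, norm_zero]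
    positivity

theorem norm_jacobi_mul_backwardDelta_le (hf : f ∈ MPlus 2)
    (hM : ∀ x < 1, leftExt f x * (1 - x) ^ β ≤ M) (hh : 0 ≤ h) (hh' : h ≤ 1 / 2)
    (hx : 1 / 2 < x) (hx' : x < 1) :
    ‖jacobi α β x * symmDelta 2 h f (x - h)‖ ≤ 2 ^ |α| * M := by
  have hmem : ∀ {y}, y ≤ x → y ∈ Iio (1 : ℝ) := fun hy => hy.trans_lt hx'
  rw [symmDelta_two_eq_secondDiff_leftExt hf hh (by linarith) (by linarith)]
  have hnonneg : 0 ≤ secondDiff (leftExt f) h (x - h) :=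
    secondDiff_nonneg (convexOn_leftExt hf) hh (hmem (by linarith)) (hmem (by linarith))
  have hle : secondDiff (leftExt f) h (x - h) ≤ leftExt f x := by
    have hmono : leftExt f (x - h - h) ≤ leftExt f (x - h) :=
      monotoneOn_leftExt hf (hmem (by linarith)) (hmem (by linarith)) (by linarith)
    have hpos : 0 ≤ leftExt f (x - h) := leftExt_nonneg hf (hmem (by linarith))
    rw [secondDiff, sub_add_cancel]
    linarith
  have hleft : (1 + x) ^ α ≤ 2 ^ |α| :=
    rpow_le_rpow_abs α (by linarith) (by linarith) (by linarith)
  have : 0 ≤ (1 - x) ^ β := Real.rpow_nonneg (by linarith) _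
  rw [Real.norm_of_nonneg (mul_nonneg (jacobi_nonneg ⟨by linarith, hx'.le⟩) hnonneg)]
  calc jacobi α β x * secondDiff (leftExt f) h (x - h)
      ≤ 2 ^ |α| * (1 - x) ^ β * leftExt f x := by
        rw [jacobi]
        gcongr
    _ = 2 ^ |α| * (leftExt f x * (1 - x) ^ β) := by ring
    _ ≤ 2 ^ |α| * M := by
        gcongr
        exact hM x hx'

theorem eight_mul_sq_rpow_inv (hδ : 0 ≤ δ) (p : ℝ) :
    (8 * δ ^ 2) ^ p⁻¹ = 8 ^ p⁻¹ * δ ^ (2 / p) := by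
  rw [Real.mul_rpow (by norm_num) (by positivity), ← Real.rpow_two, ← Real.rpow_mul hδ,
    ← div_eq_mul_inv]

theorem OmegaFwd_two_le (hf : f ∈ MPlus 2) (hαβ : 0 ≤ α ∨ β < 0)
    (hM : ∀ x < 1, leftExt f x * (1 - x) ^ β ≤ M) (hδ : 0 ≤ δ) (hδ' : δ ≤ 1 / 4) (q : ℝ≥0∞) :
    OmegaFwd 2 f δ (jacobi α β) q ≤
      ENNReal.ofReal (4 ^ |β| * 8 ^ q.toReal⁻¹ * δ ^ (2 / q.toReal) * M) := by
  have hM0 : 0 ≤ M := bound_nonneg_of_leftExt_mul_rpow_le hf hM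
  have hδ2 : 8 * δ ^ 2 ≤ 1 / 2 := by nlinarith
  have hcast : 2 * ((2 : ℕ) : ℝ) ^ 2 * δ ^ 2 = 8 * δ ^ 2 := by norm_num
  rw [OmegaFwd, hcast]
  refine iSup₂_le fun h hh => ?_
  rw [Nat.cast_ofNat, mul_div_cancel_left₀ h two_ne_zero]
  refine (LpOn_le_of_forall_mem_Ioo q (K := 4 ^ |β| * M) (by positivity)
    (le_add_of_nonneg_right (by positivity)) fun x hx => norm_jacobi_mul_forwardDelta_le hf hαβ hM
      hh.1.le (hh.2.trans hδ2) hx.1 (by linarith [hx.2])).trans_eq ?_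
  rw [add_sub_cancel_left, eight_mul_sq_rpow_inv hδ]
  ring_nf

theorem OmegaBwd_two_le (hf : f ∈ MPlus 2) (α : ℝ) (hM : ∀ x < 1, leftExt f x * (1 - x) ^ β ≤ M)
    (hδ : 0 ≤ δ) (hδ' : δ ≤ 1 / 4) (q : ℝ≥0∞) :
    OmegaBwd 2 f δ (jacobi α β) q ≤
      ENNReal.ofReal (2 ^ |α| * 8 ^ q.toReal⁻¹ * δ ^ (2 / q.toReal) * M) := by
  have hM0 : 0 ≤ M := bound_nonneg_of_leftExt_mul_rpow_le hf hM
  have hδ2 : 8 * δ ^ 2 ≤ 1 / 2 := by nlinarith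
  have hcast : 2 * ((2 : ℕ) : ℝ) ^ 2 * δ ^ 2 = 8 * δ ^ 2 := by norm_num
  rw [OmegaBwd, hcast]
  refine iSup₂_le fun h hh => ?_
  rw [Nat.cast_ofNat, mul_div_cancel_left₀ h two_ne_zero]
  refine (LpOn_le_of_forall_mem_Ioo q (K := 2 ^ |α| * M) (by positivity)
    (sub_le_self 1 (by positivity)) fun x hx => norm_jacobi_mul_backwardDelta_le hf hM
      hh.1.le (hh.2.trans hδ2) (by linarith [hx.1]) hx.2).trans_eq ?_
  rw [sub_sub_cancel, eight_mul_sq_rpow_inv hδ]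
  ring_nf

end EndParts

section MainPart

variable {f : ℝ → ℝ} {α β M h r T x p : ℝ}

/-- The set `8h²r² ≤ 1 - x ≤ 18h²r²`. There `(1-x)^β` is comparable with `(8h²r²)^β` and the
variable step `hφ(x)` is at most the constant `6h²r`. With `r = (3/2)^j`, `j ∈ ℕ`, the sets cover
`1 - x ≥ 8h²`. -/
def shell (h r : ℝ) : Set ℝ := Icc (1 - 18 * h ^ 2 * r ^ 2) (1 - 8 * h ^ 2 * r ^ 2)

theorem mul_phiW_le_of_mem_shell (hr : 0 ≤ r) (hx : |x| ≤ 1 - 8 * h ^ 2)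
    (hxr : x ∈ shell h r) : h * phiW x ≤ 6 * h ^ 2 * r := by
  have hx1 : |x| ≤ 1 := hx.trans (by linarith [sq_nonneg h])
  obtain ⟨hl, hu⟩ := abs_le.1 hx1
  refine le_of_sq_le_sq ?_ (by positivity)
  calc (h * phiW x) ^ 2 = h ^ 2 * ((1 - x) * (1 + x)) := sq_mul_phiW h hx1
    _ ≤ h ^ 2 * (18 * h ^ 2 * r ^ 2 * 2) := by
        gcongr <;> linarith [hxr.1]
    _ = (6 * h ^ 2 * r) ^ 2 := by ring

theorem shell_step_le (h : ℝ) (hr : 1 ≤ r) : 6 * h ^ 2 * r ≤ 3 / 4 * (8 * h ^ 2 * r ^ 2) := by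
  have : h ^ 2 * r ≤ h ^ 2 * r ^ 2 := mul_le_mul_of_nonneg_left (le_self_pow₀ hr two_ne_zero)
    (sq_nonneg h)
  linarith

theorem jacobi_le_mul_rpow_of_mem_shell (hh : 0 < h) (hr : 0 < r) (hx : -1 / 2 ≤ x)
    (hxr : x ∈ shell h r) :
    jacobi α β x ≤ 2 ^ |α| * (9 / 4) ^ |β| * (8 * h ^ 2 * r ^ 2) ^ β := by
  obtain ⟨hl, hu⟩ := hxr
  have hT : 0 < 8 * h ^ 2 * r ^ 2 := by positivity
  rw [jacobi, mul_assoc]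
  exact mul_le_mul (rpow_le_rpow_abs α (by linarith) (by linarith) (by linarith))
    (rpow_le_rpow_abs_mul_rpow β (by linarith) hT (by linarith) (by linarith))
    (Real.rpow_nonneg (by linarith) _) (by positivity)

theorem norm_jacobi_mul_symmDelta_le (hf : f ∈ MPlus 2) (hh : 0 < h) (hr : 1 ≤ r)
    (hx : |x| ≤ 1 - 8 * h ^ 2) (hxr : x ∈ shell h r) :
    ‖jacobi α β x * symmDelta 2 (h * phiW x) f x‖ ≤
      2 ^ |α| * (9 / 4) ^ |β| * (8 * h ^ 2 * r ^ 2) ^ β *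
        secondDiff (leftExt f) (6 * h ^ 2 * r) x := by
  set t := h * phiW x
  set S := 6 * h ^ 2 * r
  have ht : 0 ≤ t := mul_nonneg hh.le (phiW_nonneg x)
  have htx : t ≤ (1 - |x|) / 2 := mul_phiW_le hx
  have htS : t ≤ S := mul_phiW_le_of_mem_shell (by linarith) hx hxr
  have hh2 : 0 < h ^ 2 := by positivity
  have hSx : x + S < 1 := by
    have : 0 < h ^ 2 * r ^ 2 := by positivity
    linarith [hxr.2, shell_step_le h hr]
  have habs : |x| < 1 := by linarith
  obtain ⟨hl, hu⟩ := abs_lt.1 habs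
  have hconv := convexOn_leftExt hf
  have hmem : ∀ {y}, y ≤ x + S → y ∈ Iio (1 : ℝ) := fun hy => hy.trans_lt hSx
  have hdiff : 0 ≤ secondDiff (leftExt f) t x :=
    secondDiff_nonneg hconv ht (hmem (by linarith)) (hmem (by linarith))
  have hle : secondDiff (leftExt f) t x ≤ secondDiff (leftExt f) S x :=
    secondDiff_le_secondDiff hconv ht htS (hmem (by linarith)) (hmem le_rfl)
  rw [symmDelta_two_eq_secondDiff_leftExt hf ht (by linarith [neg_abs_le x])
    (by linarith [le_abs_self x])]
  rcases le_or_gt x (-1 / 2) with hx2 | hx2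
  · have hzero : secondDiff (leftExt f) t x = 0 := by
      have := abs_of_nonpos (show x ≤ 0 by linarith)
      rw [secondDiff, leftExt_of_nonpos hf (by linarith), leftExt_of_nonpos hf (by linarith),
        leftExt_of_nonpos hf (by linarith), mul_zero, sub_zero, add_zero]
    rw [hzero, mul_zero, norm_zero]
    have := hdiff.trans hle
    positivity
  · rw [Real.norm_of_nonneg (mul_nonneg (jacobi_nonneg ⟨hl.le, hu.le⟩) hdiff)]
    have hw : jacobi α β x ≤ 2 ^ |α| * (9 / 4) ^ |β| * (8 * h ^ 2 * r ^ 2) ^ β :=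
      jacobi_le_mul_rpow_of_mem_shell hh (by linarith) hx2.le hxr
    exact mul_le_mul hw hle hdiff (by positivity)

theorem rpow_mul_leftExt_sub_le (hf : f ∈ MPlus 2) (hM : ∀ x < 1, leftExt f x * (1 - x) ^ β ≤ M)
    {S : ℝ} (hT : 0 < T) (hS : 0 < S) (hST : S ≤ 3 / 4 * T) :
    T ^ β * (leftExt f (1 - T + S) - leftExt f (1 - T)) ≤ 8 * 8 ^ |β| * M * (S / T) := by
  have hz : 1 - T / 8 < 1 := by linarith
  have hpos : 0 ≤ leftExt f (1 - T / 8) := leftExt_nonneg hf hz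
  have hinc : leftExt f (1 - T + S) - leftExt f (1 - T) ≤ 8 * (S / T) * leftExt f (1 - T / 8) := by
    have hslope := sub_le_div_mul_of_convexOn (convexOn_leftExt hf)
      (x := 1 - T) (y := 1 - T + S) (mem_Iio.2 (by linarith)) (mem_Iio.2 hz)
      (by linarith) (by linarith) (leftExt_nonneg hf (by linarith))
    refine hslope.trans (mul_le_mul_of_nonneg_right ?_ hpos)
    rw [add_sub_cancel_left, ← mul_div_assoc, div_le_div_iff₀ (by linarith) hT]
    nlinarith
  have hpow : T ^ β ≤ 8 ^ |β| * (T / 8) ^ β :=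
    rpow_le_rpow_abs_mul_rpow β hT (by linarith) (by linarith) (by linarith)
  have hgrowth : leftExt f (1 - T / 8) * (T / 8) ^ β ≤ M := by simpa using hM _ hz
  calc T ^ β * (leftExt f (1 - T + S) - leftExt f (1 - T))
      ≤ T ^ β * (8 * (S / T) * leftExt f (1 - T / 8)) := by gcongr
    _ ≤ 8 ^ |β| * (T / 8) ^ β * (8 * (S / T) * leftExt f (1 - T / 8)) := by gcongr
    _ = 8 * 8 ^ |β| * (S / T) * (leftExt f (1 - T / 8) * (T / 8) ^ β) := by ring
    _ ≤ 8 * 8 ^ |β| * (S / T) * M := by gcongr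
    _ = 8 * 8 ^ |β| * M * (S / T) := by ring

theorem setLIntegral_shell_secondDiff_rpow_le (hf : f ∈ MPlus 2) (hh : 0 < h) (hr : 1 ≤ r)
    (hp : 1 ≤ p) :
    ∫⁻ x in shell h r, ENNReal.ofReal (secondDiff (leftExt f) (6 * h ^ 2 * r) x) ^ p ≤
      ENNReal.ofReal (6 * h ^ 2 * r * (leftExt f (1 - 8 * h ^ 2 * r ^ 2 + 6 * h ^ 2 * r) -
        leftExt f (1 - 8 * h ^ 2 * r ^ 2)) ^ p) := by
  have hhr : 0 < h ^ 2 * r ^ 2 := by positivity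
  have hsub : Icc (1 - 18 * h ^ 2 * r ^ 2 - 6 * h ^ 2 * r)
      (1 - 8 * h ^ 2 * r ^ 2 + 6 * h ^ 2 * r) ⊆ Iio 1 := fun x hx => by
    rw [mem_Iio]
    linarith [hx.2, shell_step_le h hr]
  exact setLIntegral_secondDiff_rpow_le ((convexOn_leftExt hf).subset hsub (convex_Icc _ _))
    ((monotoneOn_leftExt hf).mono hsub) (by linarith) (by positivity) hp

theorem setLIntegral_shell_le_increment (hf : f ∈ MPlus 2) (α β : ℝ) (hh : 0 < h) (hr : 1 ≤ r)
    (hp : 1 ≤ p) :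
    ∫⁻ x in shell h r ∩ Icc (-1 + 8 * h ^ 2) (1 - 8 * h ^ 2),
        ‖jacobi α β x * symmDelta 2 (h * phiW x) f x‖ₑ ^ p ≤
      ENNReal.ofReal (2 ^ |α| * (9 / 4) ^ |β| * (8 * h ^ 2 * r ^ 2) ^ β) ^ p *
        ENNReal.ofReal (6 * h ^ 2 * r * (leftExt f (1 - 8 * h ^ 2 * r ^ 2 + 6 * h ^ 2 * r) -
          leftExt f (1 - 8 * h ^ 2 * r ^ 2)) ^ p) := by
  set B := 2 ^ |α| * (9 / 4) ^ |β| * (8 * h ^ 2 * r ^ 2) ^ β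
  set S := 6 * h ^ 2 * r
  have hp0 : 0 ≤ p := by linarith
  have hB : 0 ≤ B := by positivity
  calc ∫⁻ x in shell h r ∩ Icc (-1 + 8 * h ^ 2) (1 - 8 * h ^ 2),
        ‖jacobi α β x * symmDelta 2 (h * phiW x) f x‖ₑ ^ p
      ≤ ∫⁻ x in shell h r ∩ Icc (-1 + 8 * h ^ 2) (1 - 8 * h ^ 2),
          ENNReal.ofReal B ^ p * ENNReal.ofReal (secondDiff (leftExt f) S x) ^ p := by
        refine setLIntegral_mono' (measurableSet_Icc.inter measurableSet_Icc) fun x hx => ?_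
        rw [← ENNReal.mul_rpow_of_nonneg _ _ hp0, ← ENNReal.ofReal_mul hB, ← ofReal_norm]
        gcongr
        exact norm_jacobi_mul_symmDelta_le hf hh hr
          (abs_le.2 ⟨by linarith [hx.2.1], hx.2.2⟩) hx.1
    _ ≤ ∫⁻ x in shell h r,
          ENNReal.ofReal B ^ p * ENNReal.ofReal (secondDiff (leftExt f) S x) ^ p :=
        lintegral_mono_set inter_subset_left
    _ = ENNReal.ofReal B ^ p *
          ∫⁻ x in shell h r, ENNReal.ofReal (secondDiff (leftExt f) S x) ^ p :=
        lintegral_const_mul' _ _ (ENNReal.rpow_ne_top_of_nonneg hp0 ENNReal.ofReal_ne_top)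
    _ ≤ _ := by
        gcongr
        exact setLIntegral_shell_secondDiff_rpow_le hf hh hr hp

theorem setLIntegral_shell_le (hf : f ∈ MPlus 2) (α : ℝ)
    (hM : ∀ x < 1, leftExt f x * (1 - x) ^ β ≤ M) (hh : 0 < h) (hr : 1 ≤ r) (hp : 1 ≤ p) :
    ∫⁻ x in shell h r ∩ Icc (-1 + 8 * h ^ 2) (1 - 8 * h ^ 2),
        ‖jacobi α β x * symmDelta 2 (h * phiW x) f x‖ₑ ^ p ≤
      ENNReal.ofReal ((6 * 2 ^ |α| * 18 ^ |β| * M) ^ p * (6 * h ^ 2) * r ^ (1 - p)) := by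
  refine (setLIntegral_shell_le_increment hf α β hh hr hp).trans ?_
  have hM0 : 0 ≤ M := bound_nonneg_of_leftExt_mul_rpow_le hf hM
  set T := 8 * h ^ 2 * r ^ 2 with hT
  set S := 6 * h ^ 2 * r with hS
  set E := leftExt f (1 - T + S) - leftExt f (1 - T)
  have hT0 : 0 < T := by positivity
  have hS0 : 0 < S := by positivity
  have hST : S ≤ 3 / 4 * T := shell_step_le h hr
  have hE : 0 ≤ E := sub_nonneg.2 <| monotoneOn_leftExt hf (mem_Iio.2 (by linarith))
    (mem_Iio.2 (by linarith)) (by linarith)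
  have hratio : 8 * (S / T) = 6 / r := by
    rw [hS, hT]
    field_simp
  have hincrement : 2 ^ |α| * (9 / 4) ^ |β| * T ^ β * E ≤ 6 * 2 ^ |α| * 18 ^ |β| * M / r := by
    calc 2 ^ |α| * (9 / 4) ^ |β| * T ^ β * E = 2 ^ |α| * (9 / 4) ^ |β| * (T ^ β * E) := by ring
      _ ≤ 2 ^ |α| * (9 / 4) ^ |β| * (8 * 8 ^ |β| * M * (S / T)) :=
          mul_le_mul_of_nonneg_left (rpow_mul_leftExt_sub_le hf hM hT0 hS0 hST) (by positivity)
      _ = 2 ^ |α| * ((9 / 4) ^ |β| * 8 ^ |β|) * M * (8 * (S / T)) := by ring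
      _ = 2 ^ |α| * 18 ^ |β| * M * (6 / r) := by
          rw [← Real.mul_rpow (by norm_num) (by norm_num), hratio]
          norm_num
      _ = 6 * 2 ^ |α| * 18 ^ |β| * M / r := by ring
  rw [ENNReal.ofReal_rpow_of_nonneg (by positivity) (by linarith),
    ← ENNReal.ofReal_mul (by positivity), mul_left_comm, ← Real.mul_rpow (by positivity) hE]
  refine ENNReal.ofReal_le_ofReal ?_
  calc S * (2 ^ |α| * (9 / 4) ^ |β| * T ^ β * E) ^ p
      ≤ S * (6 * 2 ^ |α| * 18 ^ |β| * M / r) ^ p := by gcongr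
    _ = _ := by
        rw [Real.div_rpow (by positivity) (by linarith), Real.rpow_sub (by linarith),
          Real.rpow_one, hS]
        ring

theorem Icc_subset_iUnion_shell (hh : 0 < h) (a : ℝ) :
    Icc a (1 - 8 * h ^ 2) ⊆ ⋃ j : ℕ, shell h ((3 / 2) ^ j) := by
  intro x hx
  have h8 : 0 < 8 * h ^ 2 := by positivity
  have hone : 1 ≤ (1 - x) / (8 * h ^ 2) := (one_le_div h8).2 (by linarith [hx.2])
  obtain ⟨j, hlow, hhigh⟩ := exists_nat_pow_near hone (by norm_num : (1 : ℝ) < (3 / 2) ^ 2)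
  rw [le_div_iff₀ h8, pow_right_comm] at hlow
  rw [div_lt_iff₀ h8, pow_succ, pow_right_comm] at hhigh
  exact mem_iUnion.2 ⟨j, by linarith, by linarith⟩

theorem setLIntegral_jacobi_mul_symmDelta_le (hf : f ∈ MPlus 2) (α : ℝ)
    (hM : ∀ x < 1, leftExt f x * (1 - x) ^ β ≤ M) (hh : 0 < h) (hp : 1 < p) :
    ∫⁻ x in Icc (-1 + 8 * h ^ 2) (1 - 8 * h ^ 2),
        ‖jacobi α β x * symmDelta 2 (h * phiW x) f x‖ₑ ^ p ≤
      ENNReal.ofReal ((6 * 2 ^ |α| * 18 ^ |β| * M) ^ p * (6 * h ^ 2) *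
        (1 - (3 / 2) ^ (1 - p))⁻¹) := by
  have hM0 : 0 ≤ M := bound_nonneg_of_leftExt_mul_rpow_le hf hM
  set A := Icc (-1 + 8 * h ^ 2) (1 - 8 * h ^ 2)
  set K := (6 * 2 ^ |α| * 18 ^ |β| * M) ^ p * (6 * h ^ 2)
  set ρ : ℝ := (3 / 2) ^ (1 - p)
  set F : ℝ → ℝ≥0∞ := fun x => ‖jacobi α β x * symmDelta 2 (h * phiW x) f x‖ₑ ^ p
  have hρ0 : 0 ≤ ρ := by positivity
  have hρ1 : ρ < 1 := Real.rpow_lt_one_of_one_lt_of_neg (by norm_num) (by linarith)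
  have hcover : A ⊆ ⋃ j : ℕ, shell h ((3 / 2) ^ j) ∩ A := by
    rw [← iUnion_inter]
    exact subset_inter (Icc_subset_iUnion_shell hh _) subset_rfl
  have hpiece : ∀ j : ℕ, ∫⁻ x in shell h ((3 / 2) ^ j) ∩ A, F x ≤ ENNReal.ofReal (K * ρ ^ j) := by
    intro j
    rw [Real.rpow_pow_comm (by norm_num : (0 : ℝ) ≤ 3 / 2)]
    exact setLIntegral_shell_le hf α hM hh (one_le_pow₀ (by norm_num)) hp.le
  calc ∫⁻ x in A, F x ≤ ∫⁻ x in ⋃ j : ℕ, shell h ((3 / 2) ^ j) ∩ A, F x :=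
        lintegral_mono_set hcover
    _ ≤ ∑' j : ℕ, ∫⁻ x in shell h ((3 / 2) ^ j) ∩ A, F x := lintegral_iUnion_le _ _
    _ ≤ ∑' j : ℕ, ENNReal.ofReal (K * ρ ^ j) := ENNReal.tsum_le_tsum hpiece
    _ = ENNReal.ofReal (∑' j : ℕ, K * ρ ^ j) :=
        (ENNReal.ofReal_tsum_of_nonneg (fun j => by positivity)
          ((summable_geometric_of_lt_one hρ0 hρ1).mul_left _)).symm
    _ = ENNReal.ofReal (K * (1 - ρ)⁻¹) := by
        rw [tsum_mul_left, tsum_geometric_of_lt_one hρ0 hρ1]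

end MainPart

theorem inv_one_sub_rpow_nonneg {b p : ℝ} (hb : 1 ≤ b) (hp : 1 ≤ p) :
    0 ≤ (1 - b ^ (1 - p))⁻¹ :=
  inv_nonneg.2 (sub_nonneg.2 (Real.rpow_le_one_of_one_le_of_nonpos hb (sub_nonpos.2 hp)))

theorem OmegaMain_two_le {f : ℝ → ℝ} {β M δ : ℝ} {q : ℝ≥0∞} (hf : f ∈ MPlus 2) (α : ℝ)
    (hM : ∀ x < 1, leftExt f x * (1 - x) ^ β ≤ M) (hq1 : 1 < q) (hq2 : q < ∞) :
    OmegaMain 2 f δ (jacobi α β) q ≤ ENNReal.ofReal (6 * 2 ^ |α| * 18 ^ |β| *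
      (6 * (1 - (3 / 2) ^ (1 - q.toReal))⁻¹) ^ q.toReal⁻¹ * δ ^ (2 / q.toReal) * M) := by
  have hM0 : 0 ≤ M := bound_nonneg_of_leftExt_mul_rpow_le hf hM
  have hp : 1 < q.toReal := by simpa using ENNReal.toReal_strict_mono hq2.ne hq1
  set p := q.toReal with hpq
  set K := 6 * 2 ^ |α| * 18 ^ |β| * M
  set G : ℝ := 6 * (1 - (3 / 2) ^ (1 - p))⁻¹
  have hK : 0 ≤ K := by positivity
  have hG : 0 ≤ G := mul_nonneg (by norm_num) (inv_one_sub_rpow_nonneg (by norm_num) hp.le)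
  refine iSup₂_le fun h hh => ?_
  have hh0 : 0 < h := hh.1
  have hcast : 2 * ((2 : ℕ) : ℝ) ^ 2 * h ^ 2 = 8 * h ^ 2 := by norm_num
  rw [hcast, LpOn, eLpNorm_eq_lintegral_rpow_enorm_toReal (zero_lt_one.trans hq1).ne' hq2.ne,
    ← hpq, one_div]
  calc _ ≤ ENNReal.ofReal (K ^ p * (G * h ^ 2)) ^ p⁻¹ := by
        refine ENNReal.rpow_le_rpow ?_ (by positivity)
        convert setLIntegral_jacobi_mul_symmDelta_le hf α hM hh0 hp using 2
        ring
    _ = ENNReal.ofReal (K * (G ^ p⁻¹ * h ^ (2 / p))) := by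
        rw [ENNReal.ofReal_rpow_of_nonneg (by positivity) (by positivity),
          Real.mul_rpow (by positivity) (by positivity), Real.rpow_rpow_inv hK (by linarith),
          Real.mul_rpow hG (by positivity), ← Real.rpow_two, ← Real.rpow_mul hh0.le,
          ← div_eq_mul_inv]
    _ ≤ ENNReal.ofReal (K * (G ^ p⁻¹ * δ ^ (2 / p))) := by
        gcongr
        exact hh.2
    _ = _ := by
        congr 1
        ring

theorem statement17_general (α β : ℝ) (hαβ : 0 ≤ α ∨ β < 0) (q : ℝ≥0∞) (hq1 : 1 < q)
    (hq2 : q < ∞) :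
    ∃ c > (0 : ℝ), ∀ f ∈ MPlus 2, ∀ δ : ℝ, 0 < δ → δ ≤ 1 / 4 →
      omegaDT 2 f δ (jacobi α β) q ≤
        ENNReal.ofReal (c * δ ^ (2 / q.toReal)) *
          LpOn (fun x => jacobi α β x * f x) ∞ (-1) 1 := by
  set A : ℝ := 6 * 2 ^ |α| * 18 ^ |β| * (6 * (1 - (3 / 2) ^ (1 - q.toReal))⁻¹) ^ q.toReal⁻¹
  set B : ℝ := 4 ^ |β| * 8 ^ q.toReal⁻¹
  set C : ℝ := 2 ^ |α| * 8 ^ q.toReal⁻¹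
  have hA : 0 ≤ A := by
    have hp : 1 ≤ q.toReal := by simpa using ENNReal.toReal_mono hq2.ne hq1.le
    have := inv_one_sub_rpow_nonneg (b := 3 / 2) (by norm_num) hp
    positivity
  refine ⟨(A + B + C) * 2 ^ |α|, by positivity, fun f hf δ hδ hδ' => ?_⟩
  set N := LpOn (fun x => jacobi α β x * f x) ∞ (-1) 1
  have hc : 0 < (A + B + C) * 2 ^ |α| * δ ^ (2 / q.toReal) := by positivity
  rcases eq_or_ne N ∞ with hN | hN
  · rw [hN, ENNReal.mul_top (ENNReal.ofReal_pos.2 hc).ne']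
    exact le_top
  have hM : ∀ x < 1, leftExt f x * (1 - x) ^ β ≤ 2 ^ |α| * N.toReal :=
    fun x hx => leftExt_mul_rpow_le hf hN hx
  calc omegaDT 2 f δ (jacobi α β) q
      ≤ _ := add_le_add_three (OmegaMain_two_le hf α hM hq1 hq2)
        (OmegaFwd_two_le hf hαβ hM hδ.le hδ' q) (OmegaBwd_two_le hf α hM hδ.le hδ' q)
    _ = ENNReal.ofReal ((A + B + C) * 2 ^ |α| * δ ^ (2 / q.toReal)) * ENNReal.ofReal N.toReal := by
        rw [← ENNReal.ofReal_add (by positivity) (by positivity),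
          ← ENNReal.ofReal_add (by positivity) (by positivity), ← ENNReal.ofReal_mul hc.le]
        congr 1
        ring
    _ = _ := by rw [ENNReal.ofReal_toReal hN]

theorem statement17 (β : ℝ) (q : ℝ≥0∞) (hq1 : 1 < q) (hq2 : q < ∞) :
    ∃ c > (0 : ℝ), ∀ f : ℝ → ℝ, f ∈ MPlus 2 ∩ WSet ∞ β β → ∀ δ : ℝ, 0 < δ → δ ≤ 1 / 4 →
      omegaDT 2 f δ (jacobi β β) q ≤
        ENNReal.ofReal (c * δ ^ (2 / q.toReal)) *
          LpOn (fun x => jacobi β β x * f x) ∞ (-1) 1 := by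
  obtain ⟨c, hc, hbound⟩ := statement17_general β β (le_or_gt 0 β) q hq1 hq2
  exact ⟨c, hc, fun f hf => hbound f hf.1⟩
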